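/- Let A have rank m (so A Aᵀ is invertible), ν = n − m, K a ν × n matrix whose rows form a basis of the null space of A, x̄ with A x̄ = b, and ρ > 0. Define U = {u ∈ ℝ^m : Aᵀ u ≤ 0 componentwise, bᵀ u = ρ} and V = {v ∈ ℝ^n : K v = 0, v ≥ 0 componentwise, −x̄ᵀ v = ρ}. Then the map u ↦ −Aᵀ u is a bijection from U onto V, whose inverse is v ↦ −(A Aᵀ)⁻¹ A v; in particular U is nonempty if and only if V is nonempty. -/

import Mathlib

open Matrix

/-- With `U = {u : Aᵀ u ≤ 0, bᵀ u = ρ}` and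
`V = {v : K v = 0, v ≥ 0, −x̄ᵀ v = ρ}`, the map `u ↦ −Aᵀ u` is a bijection from
`U` onto `V` with inverse `v ↦ −(A Aᵀ)⁻¹ A v`; in particular `U` is nonempty iff
`V` is nonempty. -/
theorem bijOn_U_V (m n ν : ℕ) (hmn : m ≤ n) (hν : ν = n - m)
    (A : Matrix (Fin m) (Fin n) ℝ) (hrank : A.rank = m)
    (b : Fin m → ℝ) (hb : b ≠ 0) (ρ : ℝ) (hρ : 0 < ρ)
    (K : Matrix (Fin ν) (Fin n) ℝ)
    (hKind : LinearIndependent ℝ (fun i => K i))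
    (hKspan : Submodule.span ℝ (Set.range (fun i => K i)) = LinearMap.ker A.mulVecLin)
    (xbar : Fin n → ℝ) (hxbar : A.mulVec xbar = b) :
    Set.BijOn (fun u : Fin m → ℝ => -(Aᵀ.mulVec u))
      {u : Fin m → ℝ | Aᵀ.mulVec u ≤ 0 ∧ b ⬝ᵥ u = ρ}
      {v : Fin n → ℝ | K.mulVec v = 0 ∧ 0 ≤ v ∧ -(xbar ⬝ᵥ v) = ρ} ∧
    Set.InvOn (fun v : Fin n → ℝ => -((A * Aᵀ)⁻¹ * A).mulVec v)
      (fun u : Fin m → ℝ => -(Aᵀ.mulVec u))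
      {u : Fin m → ℝ | Aᵀ.mulVec u ≤ 0 ∧ b ⬝ᵥ u = ρ}
      {v : Fin n → ℝ | K.mulVec v = 0 ∧ 0 ≤ v ∧ -(xbar ⬝ᵥ v) = ρ} ∧
    ((∃ u : Fin m → ℝ, Aᵀ.mulVec u ≤ 0 ∧ b ⬝ᵥ u = ρ) ↔
      (∃ v : Fin n → ℝ, K.mulVec v = 0 ∧ 0 ≤ v ∧ -(xbar ⬝ᵥ v) = ρ)) := by
  have hdet : IsUnit (A * Aᵀ).det := by
    rw [← Matrix.isUnit_iff_isUnit_det]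
    have hr : (A * Aᵀ).rank = m := by rw [Matrix.rank_self_mul_transpose, hrank]
    rw [← Matrix.mulVec_surjective_iff_isUnit]
    have h2 : LinearMap.range (A * Aᵀ).mulVecLin = ⊤ := by
      apply Submodule.eq_top_of_finrank_eq
      rw [Module.finrank_fin_fun]
      exact hr
    exact LinearMap.range_eq_top.mp h2
  have hker : ∀ x v : Fin n → ℝ, A.mulVec x = 0 → K.mulVec v = 0 → x ⬝ᵥ v = 0 := by
    intro x v hx hv
    have hxm : x ∈ Submodule.span ℝ (Set.range (fun i => K i)) := by
      rw [hKspan]; simpa using hx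
    clear hx
    induction hxm using Submodule.span_induction with
    | mem y hy =>
      obtain ⟨i, rfl⟩ := hy
      exact congrFun hv i
    | zero => simp
    | add y z _ _ h1 h2 => rw [add_dotProduct, h1, h2, add_zero]
    | smul a y _ h => rw [smul_dotProduct, h, smul_zero]
  have hKA : ∀ i, A.mulVec (K i) = 0 := by
    intro i
    have : K i ∈ LinearMap.ker A.mulVecLin := by
      rw [← hKspan]; exact Submodule.subset_span ⟨i, rfl⟩
    simpa using this
  have hT : ∀ (x : Fin n → ℝ) (u : Fin m → ℝ), x ⬝ᵥ Aᵀ.mulVec u = A.mulVec x ⬝ᵥ u := by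
    intro x u
    rw [Matrix.dotProduct_mulVec, Matrix.vecMul_transpose]
  have hmaps : Set.MapsTo (fun u : Fin m → ℝ => -(Aᵀ.mulVec u))
      {u : Fin m → ℝ | Aᵀ.mulVec u ≤ 0 ∧ b ⬝ᵥ u = ρ}
      {v : Fin n → ℝ | K.mulVec v = 0 ∧ 0 ≤ v ∧ -(xbar ⬝ᵥ v) = ρ} := by
    rintro u ⟨h1, h2⟩
    refine ⟨?_, ?_, ?_⟩
    · ext i
      change K i ⬝ᵥ -(Aᵀ.mulVec u) = 0
      rw [dotProduct_neg, hT, hKA]; simp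
    · exact neg_nonneg.mpr h1
    · simp only [dotProduct_neg, hT, hxbar, neg_neg, h2]
  have hleft : ∀ u : Fin m → ℝ, -((A * Aᵀ)⁻¹ * A).mulVec (-(Aᵀ.mulVec u)) = u := by
    intro u
    rw [Matrix.mulVec_neg, neg_neg, Matrix.mulVec_mulVec, Matrix.mul_assoc,
      Matrix.nonsing_inv_mul _ hdet, Matrix.one_mulVec]
  have hright : ∀ v : Fin n → ℝ, K.mulVec v = 0 →
      -(Aᵀ.mulVec (-((A * Aᵀ)⁻¹ * A).mulVec v)) = v := by
    intro v hv
    rw [Matrix.mulVec_neg, neg_neg]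
    set z := ((A * Aᵀ)⁻¹ * A).mulVec v with hz
    have hw : A.mulVec (v - Aᵀ.mulVec z) = 0 := by
      rw [Matrix.mulVec_sub, Matrix.mulVec_mulVec, hz, Matrix.mulVec_mulVec, ← Matrix.mul_assoc,
        Matrix.mul_nonsing_inv _ hdet, Matrix.one_mul, sub_self]
    have h0 : (v - Aᵀ.mulVec z) ⬝ᵥ (v - Aᵀ.mulVec z) = 0 := by
      rw [dotProduct_sub (v - Aᵀ.mulVec z), hker _ v hw hv, hT, hw]; simp
    exact (sub_eq_zero.mp (dotProduct_self_eq_zero.mp h0)).symm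
  have hmaps' : Set.MapsTo (fun v : Fin n → ℝ => -((A * Aᵀ)⁻¹ * A).mulVec v)
      {v : Fin n → ℝ | K.mulVec v = 0 ∧ 0 ≤ v ∧ -(xbar ⬝ᵥ v) = ρ}
      {u : Fin m → ℝ | Aᵀ.mulVec u ≤ 0 ∧ b ⬝ᵥ u = ρ} := by
    rintro v ⟨h1, h2, h3⟩
    have h := hright v h1
    refine ⟨?_, ?_⟩
    · apply neg_nonneg.mp
      rw [h]; exact h2
    · rw [← hxbar, ← hT, ← h3]
      conv_rhs => rw [← h]
      rw [dotProduct_neg, neg_neg]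
  have hinv : Set.InvOn (fun v : Fin n → ℝ => -((A * Aᵀ)⁻¹ * A).mulVec v)
      (fun u : Fin m → ℝ => -(Aᵀ.mulVec u))
      {u : Fin m → ℝ | Aᵀ.mulVec u ≤ 0 ∧ b ⬝ᵥ u = ρ}
      {v : Fin n → ℝ | K.mulVec v = 0 ∧ 0 ≤ v ∧ -(xbar ⬝ᵥ v) = ρ} :=
    ⟨fun u _ => hleft u, fun v hv => hright v hv.1⟩
  exact ⟨hinv.bijOn hmaps hmaps', hinv,
    fun ⟨u, hu⟩ => ⟨_, hmaps hu⟩, fun ⟨v, hv⟩ => ⟨_, hmaps' hv⟩⟩
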